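/- arXiv:2502.17853 — 9 statements merged into one kernel-verified Lean document; each statement's English description precedes it below -/
import Mathlib

section
/- Let d ≥ 1 be an integer, let G* : ℝ → ℝ be continuously differentiable, let D ⊆ (−∞,0) × ℝ^d be open, and let y : D → ℝ^d be differentiable and satisfy, for all (s,x) ∈ D and all i = 1,…,d, y_i(s,x) − x_i = 2 s · G*′(⟨y(s,x)⟩), where ⟨z⟩ := z₁+⋯+z_d. Define Ĝ(s,x) := −|y(s,x) − x|²/(4s) + G*(⟨y(s,x)⟩), where |·| is the Euclidean norm on ℝ^d. Then for all (s,x) ∈ D and all i = 1,…,d: ∂Ĝ/∂x_i (s,x) = G*′(⟨y(s,x)⟩) and ∂Ĝ/∂s (s,x) = |y(s,x) − x|²/(4s²). In particular Ĝ satisfies the Hamilton–Jacobi equation ∂Ĝ/∂s = |∇_x Ĝ|² on D. -/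
/-- Chain rule along a curve `(σ, ξ)` with `z = y ∘ (σ, ξ)`. -/
theorem hopf_lax_curve {d : ℕ} (Gs : ℝ → ℝ) (hGs : Differentiable ℝ Gs)
    (σ : ℝ → ℝ) (ξ z : ℝ → Fin d → ℝ) (σ' : ℝ) (ξ' z' : Fin d → ℝ) (t : ℝ)
    (hσ : HasDerivAt σ σ' t) (hξ : HasDerivAt ξ ξ' t) (hz : HasDerivAt z z' t)
    (hs : σ t ≠ 0)
    (heq : ∀ i, z t i - ξ t i = 2 * σ t * deriv Gs (∑ j, z t j)) :
    HasDerivAt (fun r => -(∑ i, (z r i - ξ r i) ^ 2) / (4 * σ r) + Gs (∑ j, z r j))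
      (deriv Gs (∑ j, z t j) * ∑ i, ξ' i
        + (∑ i, (z t i - ξ t i) ^ 2) / (4 * σ t ^ 2) * σ') t := by
  have hz1 := hasDerivAt_pi.1 hz
  have hξ1 := hasDerivAt_pi.1 hξ
  have hS : HasDerivAt (fun r => ∑ j, z r j) (∑ j, z' j) t :=
    HasDerivAt.fun_sum fun j _ => hz1 j
  have hQ : HasDerivAt (fun r => ∑ i, (z r i - ξ r i) ^ 2)
      (∑ i, 2 * (z t i - ξ t i) * (z' i - ξ' i)) t := by
    refine HasDerivAt.fun_sum fun i _ => ?_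
    simpa using ((hz1 i).sub (hξ1 i)).fun_pow 2
  have hG := (hGs (∑ j, z t j)).hasDerivAt.comp t hS
  have hQ2 : (∑ i, 2 * (z t i - ξ t i) * (z' i - ξ' i))
      = 4 * σ t * deriv Gs (∑ j, z t j) * (∑ i, z' i - ∑ i, ξ' i) := by
    rw [← Finset.sum_sub_distrib, Finset.mul_sum]
    refine Finset.sum_congr rfl fun i _ => ?_
    rw [heq i]; ring
  rw [hQ2] at hQ
  have h := (hQ.fun_neg.fun_div (hσ.const_mul 4) (by simpa using hs)).add hG
  refine h.congr_deriv ?_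
  field_simp
  ring

/-- the Hopf–Lax type function `Ĝ` built from the implicit minimizer `y`
has partial derivatives `∂Ĝ/∂x_i = G*'(⟨y⟩)` and `∂Ĝ/∂s = |y-x|²/(4s²)`, so it solves the
Hamilton–Jacobi equation `∂Ĝ/∂s = |∇ₓĜ|²`. -/
theorem hopf_lax_solves_HJ
    (d : ℕ) (hd : 1 ≤ d) (Gs : ℝ → ℝ) (hGs : ContDiff ℝ 1 Gs)
    (D : Set (ℝ × (Fin d → ℝ))) (hD : IsOpen D) (hDneg : ∀ p ∈ D, p.1 < 0)
    (y : ℝ × (Fin d → ℝ) → (Fin d → ℝ)) (hy : DifferentiableOn ℝ y D)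
    (hyeq : ∀ p ∈ D, ∀ i : Fin d,
      y p i - p.2 i = 2 * p.1 * deriv Gs (∑ j, y p j))
    (Ghat : ℝ × (Fin d → ℝ) → ℝ)
    (hGhat : ∀ p : ℝ × (Fin d → ℝ),
      Ghat p = -(∑ i, (y p i - p.2 i) ^ 2) / (4 * p.1) + Gs (∑ j, y p j)) :
    ∀ p ∈ D,
      (∀ i : Fin d, HasDerivAt (fun v => Ghat (p.1, Function.update p.2 i v))
        (deriv Gs (∑ j, y p j)) (p.2 i)) ∧
      HasDerivAt (fun t => Ghat (t, p.2))
        ((∑ i, (y p i - p.2 i) ^ 2) / (4 * p.1 ^ 2)) p.1 ∧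
      deriv (fun t => Ghat (t, p.2)) p.1 =
        ∑ i : Fin d, (deriv (fun v => Ghat (p.1, Function.update p.2 i v)) (p.2 i)) ^ 2 := by
  intro p hp
  have hs : p.1 ≠ 0 := (hDneg p hp).ne
  have hyp : HasFDerivAt y (fderiv ℝ y p) p :=
    (hy.differentiableAt (hD.mem_nhds hp)).hasFDerivAt
  have hGd : Differentiable ℝ Gs := hGs.differentiable (by norm_num)
  have hx : ∀ i : Fin d, HasDerivAt (fun v => Ghat (p.1, Function.update p.2 i v))
      (deriv Gs (∑ j, y p j)) (p.2 i) := by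
    intro i
    have h1 : HasDerivAt (fun _ : ℝ => p.1) 0 (p.2 i) := hasDerivAt_const _ _
    have h2 : HasDerivAt (Function.update p.2 i) (Pi.single i (1 : ℝ)) (p.2 i) :=
      hasDerivAt_update p.2 i (p.2 i)
    have hc : (p.1, Function.update p.2 i (p.2 i)) = p := by simp
    have h3 := HasFDerivAt.comp_hasDerivAt (p.2 i)
      (f := fun v => (p.1, Function.update p.2 i v)) (hc.symm ▸ hyp) (h1.prodMk h2)
    have h := hopf_lax_curve Gs hGd _ _ _ _ _ _ _ h1 h2 h3 hs
      (by simpa using hyeq p hp)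
    simp only [hGhat]
    simpa using h
  have ht : HasDerivAt (fun t => Ghat (t, p.2))
      ((∑ i, (y p i - p.2 i) ^ 2) / (4 * p.1 ^ 2)) p.1 := by
    have h1 : HasDerivAt (fun t : ℝ => t) 1 p.1 := hasDerivAt_id _
    have h2 : HasDerivAt (fun _ : ℝ => p.2) 0 p.1 := hasDerivAt_const _ _
    have h3 := HasFDerivAt.comp_hasDerivAt p.1
      (f := fun t => (t, p.2)) hyp (h1.prodMk h2)
    have h := hopf_lax_curve Gs hGd _ _ _ _ _ _ _ h1 h2 h3 hs
      (by simpa using hyeq p hp)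
    simp only [hGhat]
    simpa using h
  refine ⟨hx, ht, ?_⟩
  rw [ht.deriv, Finset.sum_div]
  refine Finset.sum_congr rfl fun i _ => ?_
  rw [(hx i).deriv, hyeq p hp i]
  field_simp
  ring
end

section
/- Let d ≥ 1 be an integer, θ, r > 0, and fix a nonzero multi-index α ∈ ℕ^d. Define Â_α(k) := (2d)^k r^{k+1} θ^{2k+|α|} Γ((r+2)k + r + |α|) / ( α! (k+1)! Γ((r+1)(k+1)) ) for k ≥ 0. Then the ratio Â_α(k−1)/Â_α(k) converges as k → ∞, and lim_{k→∞} Â_α(k−1)/Â_α(k) = (r+1)^{r+1} / ( 2 θ² r (r+2)^{r+2} d ). In particular the radius of convergence of the power series Σ_{k≥0} Â_α(k) s^k equals (r+1)^{r+1} / ( 2 θ² r (r+2)^{r+2} d ). -/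
open Filter Topology

lemma aux_gamma_small {a : ℝ} (ha : 0 < a) (ha1 : a ≤ 1) :
    Tendsto (fun x : ℝ => Real.Gamma (x + a) / (Real.Gamma x * x ^ a)) atTop (𝓝 1) := by
  have hlow : Tendsto (fun x : ℝ => (x / (x + a)) ^ (1 - a)) atTop (𝓝 1) := by
    have h1 : Tendsto (fun x : ℝ => x / (x + a)) atTop (𝓝 1) := by
      have h2 : Tendsto (fun x : ℝ => 1 - a / (x + a)) atTop (𝓝 (1 - 0)) :=
        tendsto_const_nhds.sub
          (tendsto_const_nhds.div_atTop (tendsto_id.atTop_add tendsto_const_nhds))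
      rw [sub_zero] at h2
      refine h2.congr' ?_
      filter_upwards [eventually_gt_atTop 0] with x hx
      have : x + a ≠ 0 := by positivity
      field_simp
      ring
    simpa using h1.rpow_const (p := 1 - a) (Or.inl one_ne_zero)
  refine tendsto_of_tendsto_of_tendsto_of_le_of_le' hlow tendsto_const_nhds ?_ ?_
  · filter_upwards [eventually_gt_atTop 0] with x hx
    have hG := Real.Gamma_pos_of_pos hx
    have hGa := Real.Gamma_pos_of_pos (show 0 < x + a by positivity)
    have key : x * Real.Gamma x ≤ Real.Gamma (x + a) * (x + a) ^ (1 - a) := by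
      rcases ha1.eq_or_lt with rfl | h1
      · simp [Real.Gamma_add_one hx.ne']
      have := Real.Gamma_mul_add_mul_le_rpow_Gamma_mul_rpow_Gamma
        (show 0 < x + a by positivity) (show 0 < x + a + 1 by positivity) ha
        (show 0 < 1 - a by linarith) (by ring)
      rw [show a * (x + a) + (1 - a) * (x + a + 1) = x + 1 by ring,
        Real.Gamma_add_one hx.ne', Real.Gamma_add_one (show x + a ≠ 0 by positivity),
        Real.mul_rpow (by positivity) hGa.le, mul_left_comm, ← Real.rpow_add hGa] at this
      simp at this
      linarith
    rw [le_div_iff₀ (by positivity), Real.div_rpow hx.le (by positivity),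
      div_mul_eq_mul_div, div_le_iff₀ (by positivity)]
    calc x ^ (1 - a) * (Real.Gamma x * x ^ a) = x ^ (1 - a) * x ^ a * Real.Gamma x := by ring
      _ = x * Real.Gamma x := by rw [← Real.rpow_add hx]; simp
      _ ≤ _ := key
  · filter_upwards [eventually_gt_atTop 0] with x hx
    have hG := Real.Gamma_pos_of_pos hx
    rw [div_le_one (by positivity)]
    rcases ha1.eq_or_lt with rfl | h1
    · simp [Real.Gamma_add_one hx.ne', mul_comm]
    have := Real.Gamma_mul_add_mul_le_rpow_Gamma_mul_rpow_Gamma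
        hx (show 0 < x + 1 by positivity) 
        (show 0 < 1 - a by linarith) ha (by ring)
    rw [show (1 - a) * x + a * (x + 1) = x + a by ring, Real.Gamma_add_one hx.ne',
      Real.mul_rpow hx.le hG.le, mul_left_comm, ← Real.rpow_add hG] at this
    simp at this
    linarith

lemma aux_gamma_nat (n : ℕ) : ∀ {a : ℝ}, 0 < a → a ≤ n + 1 →
    Tendsto (fun x : ℝ => Real.Gamma (x + a) / (Real.Gamma x * x ^ a)) atTop (𝓝 1) := by
  induction n with
  | zero => intro a ha h; exact aux_gamma_small ha (by simpa using h)
  | succ n ih =>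
    intro a ha h
    rcases le_or_gt a 1 with h1 | h1
    · exact aux_gamma_small ha h1
    have hb := ih (a := a - 1) (by linarith) (by push_cast at h; linarith)
    have h2 : Tendsto (fun x : ℝ => 1 + (a - 1) / x) atTop (𝓝 (1 + 0)) :=
      tendsto_const_nhds.add (tendsto_const_nhds.div_atTop tendsto_id)
    have h3 := h2.mul hb
    rw [add_zero, one_mul] at h3
    refine h3.congr' ?_
    filter_upwards [eventually_gt_atTop 0] with x hx
    have hG := Real.Gamma_pos_of_pos hx
    have e1 : Real.Gamma (x + a) = (x + (a - 1)) * Real.Gamma (x + (a - 1)) := by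
      rw [← Real.Gamma_add_one (by linarith)]; congr 1; ring
    have e2 : x ^ a = x ^ (a - 1) * x := by
      rw [← Real.rpow_add_one hx.ne']; congr 1; ring
    have : 0 < x ^ (a - 1) := by positivity
    rw [e1, e2]
    field_simp

lemma aux_gamma {a : ℝ} (ha : 0 < a) :
    Tendsto (fun x : ℝ => Real.Gamma (x + a) / (Real.Gamma x * x ^ a)) atTop (𝓝 1) := by
  obtain ⟨n, hn⟩ := exists_nat_ge a
  exact aux_gamma_nat n ha (by linarith)

lemma aux_ratio (b c : ℝ) (hb : 0 < b) (p q : ℝ) :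
    Tendsto (fun n : ℕ => (c * (n : ℝ) + p) / (b * n + q)) atTop (𝓝 (c / b)) := by
  have h (u v : ℝ) : Tendsto (fun n : ℕ => u + v / (n : ℝ)) atTop (𝓝 (u + 0)) :=
    tendsto_const_nhds.add (tendsto_const_nhds.div_atTop tendsto_natCast_atTop_atTop)
  have h1 := (h c p).div (h b q) (by simpa using hb.ne')
  rw [add_zero, add_zero] at h1
  refine h1.congr' ?_
  filter_upwards [eventually_gt_atTop 0] with n hn
  have : (0 : ℝ) < n := by exact_mod_cast hn
  simp only [Pi.div_apply]
  rw [← mul_div_mul_right _ _ this.ne']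
  congr 1 <;> field_simp

lemma aux_limit (r m : ℝ) (hr : 0 < r) (hm : 0 ≤ m) :
    Tendsto (fun n : ℕ => ((n : ℝ) + 2) *
      (Real.Gamma ((r + 1) * ((n : ℝ) + 1) + (r + 1)) / Real.Gamma ((r + 1) * ((n : ℝ) + 1))) /
      (Real.Gamma ((r + 2) * n + r + m + (r + 2)) / Real.Gamma ((r + 2) * n + r + m))) atTop
      (𝓝 ((r + 1) ^ (r + 1) / (r + 2) ^ (r + 2))) := by
  have hn : Tendsto (fun n : ℕ => (n : ℝ)) atTop atTop := tendsto_natCast_atTop_atTop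
  have hx : Tendsto (fun n : ℕ => (r + 2) * (n : ℝ) + r + m) atTop atTop :=
    ((hn.const_mul_atTop (by linarith)).atTop_add tendsto_const_nhds).atTop_add tendsto_const_nhds
  have hy : Tendsto (fun n : ℕ => (r + 1) * ((n : ℝ) + 1)) atTop atTop :=
    (hn.atTop_add tendsto_const_nhds).const_mul_atTop (by linarith)
  have gx := (aux_gamma (show 0 < r + 2 by linarith)).comp hx
  have gy := (aux_gamma (show 0 < r + 1 by linarith)).comp hy
  have r1 := aux_ratio (r + 2) 1 (by linarith) 2 (r + m)
  have r2 := (aux_ratio (r + 2) (r + 1) (by linarith) (r + 1) (r + m)).rpow_const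
    (p := r + 1) (Or.inr (by linarith))
  have := ((gy.div gx one_ne_zero).mul (r1.mul r2))
  have hL : (1 / 1 * (1 / (r + 2) * ((r + 1) / (r + 2)) ^ (r + 1)) : ℝ) =
      (r + 1) ^ (r + 1) / (r + 2) ^ (r + 2) := by
    rw [Real.div_rpow (by linarith) (by linarith)]
    have e : (r + 2) ^ (r + 2) = (r + 2) ^ (r + 1) * (r + 2) := by
      rw [← Real.rpow_add_one (show r + 2 ≠ 0 by linarith)]; congr 1; ring
    have h0 : 0 < (r + 2) ^ (r + 1) := by positivity
    rw [e]
    generalize (r + 2) ^ (r + 1) = X at *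
    generalize (r + 1) ^ (r + 1) = Y at *
    field_simp
  rw [hL] at this
  refine this.congr fun n => ?_
  simp only [Function.comp, Pi.div_apply]
  have e1 : (r + 1) * (n : ℝ) + (r + 1) = (r + 1) * ((n : ℝ) + 1) := by ring
  have e2 : (r + 2) * (n : ℝ) + (r + m) = (r + 2) * n + r + m := by ring
  rw [e1, e2, one_mul]
  have hx0 : 0 < (r + 2) * (n : ℝ) + r + m := by positivity
  have hy0 : 0 < (r + 1) * ((n : ℝ) + 1) := by positivity
  generalize (r + 2) * (n : ℝ) + r + m = x at *
  generalize (r + 1) * ((n : ℝ) + 1) = y at *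
  rw [Real.div_rpow hy0.le hx0.le, show r + 2 = (r + 1) + 1 by ring,
      Real.rpow_add_one hx0.ne']
  have := Real.Gamma_pos_of_pos hx0
  have := Real.Gamma_pos_of_pos hy0
  have := Real.Gamma_pos_of_pos (show 0 < x + (r + 1 + 1) by linarith)
  have : 0 < x ^ (r + 1) := by positivity
  have : 0 < y ^ (r + 1) := by positivity
  field_simp


/-- ratio limit and radius of convergence for the Gamma-formula coefficients
in the factorial-growth case. -/
theorem hat_A_gamma_radius_of_convergence
    (d : ℕ) (hd : 1 ≤ d) (θ r : ℝ) (hθ : 0 < θ) (hr : 0 < r)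
    (α : Fin d → ℕ) (hα : α ≠ 0)
    (A : ℕ → ℝ)
    (hA : ∀ k : ℕ,
      A k = (2 * (d : ℝ)) ^ k * r ^ (k + 1) * θ ^ (2 * k + ∑ i, α i) *
        Real.Gamma ((r + 2) * k + r + (∑ i, α i : ℕ)) /
        (((∏ i, Nat.factorial (α i) : ℕ) : ℝ) * (Nat.factorial (k + 1) : ℝ) *
          Real.Gamma ((r + 1) * ((k : ℝ) + 1)))) :
    Filter.Tendsto (fun k : ℕ => A (k - 1) / A k) Filter.atTop
      (nhds ((r + 1) ^ (r + 1) / (2 * θ ^ 2 * r * (r + 2) ^ (r + 2) * d))) ∧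
    (∀ s : ℝ, |s| < (r + 1) ^ (r + 1) / (2 * θ ^ 2 * r * (r + 2) ^ (r + 2) * d) →
      Summable (fun k : ℕ => A k * s ^ k)) ∧
    (∀ s : ℝ, (r + 1) ^ (r + 1) / (2 * θ ^ 2 * r * (r + 2) ^ (r + 2) * d) < |s| →
      ¬ Summable (fun k : ℕ => A k * s ^ k)) := by
  set m : ℕ := ∑ i, α i with hm
  set L : ℝ := (r + 1) ^ (r + 1) / (2 * θ ^ 2 * r * (r + 2) ^ (r + 2) * d) with hL
  have hd' : (0 : ℝ) < d := by exact_mod_cast hd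
  have hLpos : 0 < L := by positivity
  have hP : (0 : ℝ) < ((∏ i, Nat.factorial (α i) : ℕ) : ℝ) := by
    exact_mod_cast Finset.prod_pos fun i _ => Nat.factorial_pos _
  have hApos : ∀ k, 0 < A k := by
    intro k
    rw [hA]
    have := Real.Gamma_pos_of_pos (show 0 < (r + 2) * k + r + (m : ℝ) by positivity)
    have := Real.Gamma_pos_of_pos (show 0 < (r + 1) * ((k : ℝ) + 1) by positivity)
    positivity
  have hlim : Tendsto (fun n : ℕ => A n / A (n + 1)) atTop (𝓝 L) := by
    have h := (aux_limit r m hr (Nat.cast_nonneg m)).const_mul (1 / (2 * θ ^ 2 * r * d))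
    have e : 1 / (2 * θ ^ 2 * r * d) * ((r + 1) ^ (r + 1) / (r + 2) ^ (r + 2)) = L := by
      rw [hL]
      have : 0 < (r + 2) ^ (r + 2) := by positivity
      field_simp
    rw [e] at h
    refine h.congr fun n => ?_
    rw [hA, hA]
    have e1 : (r + 2) * ((n + 1 : ℕ) : ℝ) + r + (m : ℝ) =
      (r + 2) * n + r + m + (r + 2) := by push_cast; ring
    have e2 : (r + 1) * (((n + 1 : ℕ) : ℝ) + 1) = (r + 1) * ((n : ℝ) + 1) + (r + 1) := by
      push_cast; ring
    rw [e1, e2, Nat.factorial_succ (n + 1)]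
    have hx0 : 0 < (r + 2) * (n : ℝ) + r + m := by positivity
    have hy0 : 0 < (r + 1) * ((n : ℝ) + 1) := by positivity
    have g1 := Real.Gamma_pos_of_pos hx0
    have g2 := Real.Gamma_pos_of_pos hy0
    have g3 := Real.Gamma_pos_of_pos (show 0 < (r + 2) * (n : ℝ) + r + m + (r + 2) by linarith)
    have g4 := Real.Gamma_pos_of_pos (show 0 < (r + 1) * ((n : ℝ) + 1) + (r + 1) by linarith)
    have hf : (0 : ℝ) < ((n + 1).factorial : ℝ) := by exact_mod_cast Nat.factorial_pos _
    generalize Real.Gamma ((r + 2) * (n : ℝ) + r + m + (r + 2)) = G3 at *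
    generalize Real.Gamma ((r + 1) * ((n : ℝ) + 1) + (r + 1)) = G4 at *
    generalize Real.Gamma ((r + 2) * (n : ℝ) + r + m) = G1 at *
    generalize Real.Gamma ((r + 1) * ((n : ℝ) + 1)) = G2 at *
    generalize ((∏ i, Nat.factorial (α i) : ℕ) : ℝ) = P at *
    rw [Nat.cast_mul]
    generalize ((n + 1).factorial : ℝ) = F at *
    rw [show 2 * (n + 1) + m = (2 * n + m) + 2 by ring, pow_add θ (2 * n + m) 2, pow_succ r (n + 1),
      pow_succ (2 * (d : ℝ)) n]
    push_cast
    have hw : (0 : ℝ) < (n : ℝ) + 2 := by positivity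
    rw [show (n : ℝ) + 1 + 1 = n + 2 by ring]
    have q1 : 0 < (2 * (d : ℝ)) ^ n := by positivity
    have q2 : 0 < r ^ (n + 1) := by positivity
    have q3 : 0 < θ ^ (2 * n + m) := by positivity
    generalize (2 * (d : ℝ)) ^ n = Q1 at *
    generalize r ^ (n + 1) = Q2 at *
    generalize θ ^ (2 * n + m) = Q3 at *
    field_simp
  have hinv : Tendsto (fun n : ℕ => A (n + 1) / A n) atTop (𝓝 L⁻¹) :=
    (hlim.inv₀ hLpos.ne').congr fun n => by simp
  have hs : ∀ s : ℝ, s ≠ 0 → Tendsto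
      (fun n : ℕ => ‖A (n + 1) * s ^ (n + 1)‖ / ‖A n * s ^ n‖) atTop (𝓝 (|s| / L)) := by
    intro s hs
    have := hinv.mul_const |s|
    rw [inv_mul_eq_div] at this
    refine this.congr fun n => ?_
    have h1 := hApos n
    have h2 := abs_pos.2 hs
    rw [norm_mul, norm_mul, norm_pow, norm_pow, Real.norm_eq_abs, Real.norm_eq_abs,
      Real.norm_eq_abs, abs_of_pos h1, abs_of_pos (hApos _)]
    field_simp
    ring
  refine ⟨?_, ?_, ?_⟩
  · rw [← tendsto_add_atTop_iff_nat 1]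
    simpa using hlim
  · intro s h
    rcases eq_or_ne s 0 with rfl | h0
    · refine summable_of_ne_finset_zero (s := {0}) fun n hn => ?_
      simp only [Finset.mem_singleton] at hn
      simp [hn]
    · refine summable_of_ratio_test_tendsto_lt_one ((div_lt_one hLpos).2 h) ?_ (hs s h0)
      exact Eventually.of_forall fun n => mul_ne_zero (hApos n).ne' (pow_ne_zero _ h0)
  · intro s h
    have h0 : s ≠ 0 := abs_pos.1 (hLpos.trans h)
    exact not_summable_of_ratio_test_tendsto_gt_one ((one_lt_div hLpos).2 h) (hs s h0)
end

section
/- Let θ > 0 and r > 0 be real numbers. Then for every real y with 0 < y < 1/(θ(r+2)), one has 1 < (2 − θ(r+2) y) / ( 2 (1 − θ y)^{r+1} ) < (1/2) ((r+2)/(r+1))^{r+1}, where powers with real exponent r+1 are taken of positive bases. -/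
theorem G0_aux_mono (r : ℝ) (hr : 0 < r) :
    StrictMonoOn (fun x : ℝ => (2 - (r + 2) * x) * (1 - x) ^ (-(r + 1)))
      (Set.Icc 0 (1 / (r + 2))) := by
  have hlt : 1 / (r + 2) < 1 := by
    rw [div_lt_one (by linarith)]; linarith
  have hd : ∀ x : ℝ, x < 1 → HasDerivAt (fun x : ℝ => (2 - (r + 2) * x) * (1 - x) ^ (-(r + 1)))
      (-((r + 2) * 1) * (1 - x) ^ (-(r + 1)) +
        (2 - (r + 2) * x) * (-1 * (-(r + 1)) * (1 - x) ^ (-(r + 1) - 1))) x := by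
    intro x hx
    exact (((hasDerivAt_id x).const_mul (r + 2)).const_sub 2).mul
      (((hasDerivAt_id x).const_sub 1).rpow_const (Or.inl (by simp only [id]; linarith)))
  apply strictMonoOn_of_deriv_pos (convex_Icc _ _)
  · intro x hx
    exact (hd x (lt_of_le_of_lt hx.2 hlt)).continuousAt.continuousWithinAt
  · intro x hx
    rw [interior_Icc] at hx
    have hx1 : x < 1 := hx.2.trans hlt
    rw [(hd x hx1).deriv]
    have h1 : 0 < 1 - x := by linarith
    have e : (1 - x) ^ (-(r + 1)) = (1 - x) ^ (-(r + 1) - 1) * (1 - x) := by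
      rw [← Real.rpow_add_one h1.ne']; congr 1; ring
    have hp : 0 < (1 - x) ^ (-(r + 1) - 1) := Real.rpow_pos_of_pos h1 _
    rw [e]
    have h2 : x * (r + 2) < 1 := (lt_div_iff₀ (by linarith)).1 hx.2
    have h3 : 0 < (1 - x) ^ (-(r + 1) - 1) * (r * (1 - x * (r + 2))) :=
      mul_pos hp (mul_pos hr (by linarith))
    linarith

/-- two-sided bound for `(2 − θ(r+2)y)/(2(1−θy)^{r+1})` on `0 < y < 1/(θ(r+2))`. -/
theorem G0_ratio_two_sided_bound
    (θ r : ℝ) (hθ : 0 < θ) (hr : 0 < r) :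
    ∀ y : ℝ, 0 < y → y < 1 / (θ * (r + 2)) →
      1 < (2 - θ * (r + 2) * y) / (2 * (1 - θ * y) ^ (r + 1)) ∧
      (2 - θ * (r + 2) * y) / (2 * (1 - θ * y) ^ (r + 1)) <
        (1 / 2) * ((r + 2) / (r + 1)) ^ (r + 1) := by
  intro y hy hy2
  have hr2 : 0 < r + 2 := by linarith
  have hx0 : 0 < θ * y := mul_pos hθ hy
  have h4 : θ * y * (r + 2) < 1 := by
    have := (lt_div_iff₀ (mul_pos hθ hr2)).1 hy2
    linarith
  have hx1 : θ * y < 1 / (r + 2) := (lt_div_iff₀ hr2).2 h4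
  have h1 : 0 < 1 - θ * y := by nlinarith
  have hi : (0 : ℝ) ≤ 1 / (r + 2) := by positivity
  have m := G0_aux_mono r hr
  have a := m ⟨le_refl _, hi⟩ ⟨hx0.le, hx1.le⟩ hx0
  have b := m ⟨hx0.le, hx1.le⟩ ⟨hi, le_refl _⟩ hx1
  have e : (2 - θ * (r + 2) * y) / (2 * (1 - θ * y) ^ (r + 1)) =
      (1 / 2) * ((2 - (r + 2) * (θ * y)) * (1 - θ * y) ^ (-(r + 1))) := by
    rw [Real.rpow_neg h1.le]
    have := (Real.rpow_pos_of_pos h1 (r + 1)).ne'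
    field_simp
  have e2 : (1 - 1 / (r + 2)) ^ (-(r + 1)) = ((r + 2) / (r + 1)) ^ (r + 1) := by
    have : 1 - 1 / (r + 2) = ((r + 2) / (r + 1))⁻¹ := by
      field_simp; ring
    rw [this, Real.rpow_neg (by positivity), Real.inv_rpow (by positivity), inv_inv]
  have e3 : 2 - (r + 2) * (1 / (r + 2)) = 1 := by field_simp; norm_num
  simp only [e2, e3] at b
  simp only [mul_zero, sub_zero, Real.one_rpow] at a
  rw [e]
  constructor <;> linarith
end

section
/- For every integer k ≥ 1, Σ_{l=0}^{k} binom(k,l) (l+1)^{l−1} (k−l+1)^{k−l−1} = 2 (k+2)^{k−1}, where the exponents l−1 (for l = 0) and k−l−1 (for l = k) are interpreted so that 1^{−1} = 1 (equivalently, using truncated natural-number subtraction in the exponents gives the correct value since the base is 1 in those cases). -/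
open Polynomial in
/-- Abel's identity with `x = 1`, as an identity of polynomials. -/
theorem abel_poly (n : ℕ) :
    ∑ l ∈ Finset.range (n + 1),
      C ((n.choose l : ℚ) * ((l : ℚ) + 1) ^ (l - 1)) * (X - C (l : ℚ)) ^ (n - l)
      = (X + 1 : ℚ[X]) ^ n := by
  induction n with
  | zero => simp
  | succ n ih =>
    rw [← sub_eq_zero]
    set D : ℚ[X] := ∑ l ∈ Finset.range (n + 1 + 1),
      C (((n + 1).choose l : ℚ) * ((l : ℚ) + 1) ^ (l - 1)) * (X - C (l : ℚ)) ^ (n + 1 - l)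
      - (X + 1 : ℚ[X]) ^ (n + 1) with hD
    have hder : derivative D = 0 := by
      rw [hD, derivative_sub, derivative_sum, Finset.sum_range_succ]
      have h1 : derivative ((X + 1 : ℚ[X]) ^ (n + 1)) = C ((n : ℚ) + 1) * (X + 1) ^ n := by
        simp [derivative_pow]
      rw [h1, ← ih, Finset.mul_sum, sub_eq_zero]
      have h2 : derivative (C (((n + 1).choose (n + 1) : ℚ) * (((n + 1 : ℕ) : ℚ) + 1)
          ^ (n + 1 - 1)) * (X - C ((n + 1 : ℕ) : ℚ)) ^ (n + 1 - (n + 1))) = 0 := by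
        rw [Nat.sub_self, pow_zero, mul_one, derivative_C]
      rw [h2, add_zero]
      apply Finset.sum_congr rfl
      intro l hl
      have hl' : l ≤ n := by simpa [Nat.lt_succ_iff] using hl
      obtain ⟨m, rfl⟩ := Nat.exists_eq_add_of_le hl'
      have e1 : l + m + 1 - l = m + 1 := by omega
      have e2 : l + m - l = m := by omega
      rw [e1, e2, derivative_C_mul, derivative_X_sub_C_pow, Nat.add_sub_cancel]
      have h3 := Nat.choose_mul_succ_eq (l + m) l
      rw [e1] at h3
      have h4 : ((l + m).choose l : ℚ) * ((l + m : ℕ) + 1)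
          = ((l + m + 1).choose l : ℚ) * (m + 1) := by exact_mod_cast h3
      rw [← mul_assoc, ← mul_assoc, ← C_mul, ← C_mul]
      congr 2
      push_cast at h4 ⊢
      linear_combination (-(((l : ℚ) + 1) ^ (l - 1))) * h4
    have hev : D.eval (-1) = 0 := by
      have h0 := congrFun (fwdDiff_iter_pow_eq_zero_of_lt (R := ℚ) (Nat.lt_succ_self n)) 1
      rw [fwdDiff_iter_eq_sum_shift] at h0
      rw [hD, eval_sub, eval_finsetSum]
      simp only [eval_mul, eval_C, eval_pow, eval_sub, eval_X, eval_add, eval_one]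
      rw [neg_add_cancel, zero_pow (Nat.succ_ne_zero n), sub_zero]
      refine Eq.trans (Finset.sum_congr rfl ?_) h0
      intro l hl
      have hl' : l ≤ n + 1 := by simpa [Nat.lt_succ_iff] using hl
      have e : (-1 - (l : ℚ)) ^ (n + 1 - l) = (-1) ^ (n + 1 - l) * ((l : ℚ) + 1) ^ (n + 1 - l) := by
        rw [← mul_pow]; congr 1; ring
      have e' : ((l : ℚ) + 1) ^ (l - 1) * ((l : ℚ) + 1) ^ (n + 1 - l) = ((l : ℚ) + 1) ^ n := by
        rcases Nat.eq_zero_or_pos l with rfl | h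
        · simp
        · rw [← pow_add]; congr 1; omega
      rw [e]
      simp only [zsmul_eq_mul, nsmul_eq_mul, mul_one]
      push_cast
      rw [add_comm (1 : ℚ), ← e']
      ring
    have hc := eq_C_of_derivative_eq_zero hder
    rw [hc, eval_C] at hev
    rw [hc, hev, C_0]

/-- The case `x = y = 1` over the naturals. -/
theorem abel_one (k : ℕ) :
    ∑ l ∈ Finset.range (k + 1),
        k.choose l * (l + 1) ^ (l - 1) * (k - l + 1) ^ (k - l) = (k + 2) ^ k := by
  have h := congrArg (Polynomial.eval ((k : ℚ) + 1)) (abel_poly k)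
  rw [Polynomial.eval_finsetSum] at h
  simp only [Polynomial.eval_mul, Polynomial.eval_C, Polynomial.eval_pow, Polynomial.eval_sub,
    Polynomial.eval_X, Polynomial.eval_add, Polynomial.eval_one] at h
  have h' : ((∑ l ∈ Finset.range (k + 1),
        k.choose l * (l + 1) ^ (l - 1) * (k - l + 1) ^ (k - l) : ℕ) : ℚ)
        = (((k + 2) ^ k : ℕ) : ℚ) := by
    push_cast
    rw [show (k : ℚ) + 2 = k + 1 + 1 by ring, ← h]
    apply Finset.sum_congr rfl
    intro l hl
    have hl' : l ≤ k := by simpa [Nat.lt_succ_iff] using hl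
    rw [Nat.cast_sub hl', show (k : ℚ) - l + 1 = k + 1 - l by ring]
  exact_mod_cast h'

/-- the Abel-type combinatorial identity
`Σ_{l=0}^k C(k,l)(l+1)^{l−1}(k−l+1)^{k−l−1} = 2(k+2)^{k−1}`
(with truncated natural subtraction in the exponents). -/
theorem abel_type_identity (k : ℕ) (hk : 1 ≤ k) :
    ∑ l ∈ Finset.range (k + 1),
        k.choose l * (l + 1) ^ (l - 1) * (k - l + 1) ^ (k - l - 1) =
      2 * (k + 2) ^ (k - 1) := by
  have h1 := abel_one k
  have h2 := abel_one k
  rw [← Finset.sum_range_reflect] at h2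
  have key : ∀ a : ℕ, 1 ≤ a ∨ a = 0 → (a + 1) ^ (a - 1) * (a + 1) = (a + 1) ^ a := by
    rintro a (h | rfl)
    · rw [← pow_succ]; congr 1; omega
    · simp
  apply Nat.eq_of_mul_eq_mul_left (show 0 < k + 2 by omega)
  have hr : (k + 2) * (2 * (k + 2) ^ (k - 1)) = (k + 2) ^ k + (k + 2) ^ k := by
    obtain ⟨m, rfl⟩ := Nat.exists_eq_add_of_le' hk
    rw [Nat.add_sub_cancel]; ring
  rw [hr]
  nth_rewrite 1 [← h1]
  rw [← h2, ← Finset.sum_add_distrib, Finset.mul_sum]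
  apply Finset.sum_congr rfl
  intro l hl
  have hl' : l ≤ k := by simpa [Nat.lt_succ_iff] using hl
  obtain ⟨m, rfl⟩ := Nat.exists_eq_add_of_le hl'
  have e1 : l + m + 1 - 1 - l = m := by omega
  have e2 : l + m - l = m := by omega
  have e3 : l + m - m = l := by omega
  rw [e1, e2, e3, ← key l (by omega), ← key m (by omega), Nat.choose_symm_add]
  ring
end

section
/- For every integer d ≥ 1 and every multi-index α ∈ ℕ^d with |α| ≥ 1, the multinomial coefficient satisfies |α|!/α! < √2 · e^d · d^{|α| + d/2} / (√(2π|α|))^{d−1}. -/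
lemma aux_log_two_pi : Real.log (2 * Real.pi) ≤ 2 := by
  rw [Real.log_le_iff_le_exp (by positivity)]
  have h : Real.exp 2 = Real.exp 1 * Real.exp 1 := by rw [← Real.exp_add]; norm_num
  have := Real.exp_one_gt_d9
  have := Real.pi_lt_d2
  nlinarith

lemma aux_log_two_pi_lower : 3 / 2 ≤ Real.log (2 * Real.pi) := by
  rw [Real.le_log_iff_exp_le (by positivity)]
  have h : Real.exp (3/2) ^ 2 = Real.exp 1 ^ 3 := by
    rw [← Real.exp_nat_mul, ← Real.exp_nat_mul]; norm_num
  have h1 := Real.exp_one_lt_d9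
  have h2 := Real.pi_gt_d2
  have h3 : Real.exp 1 ^ 3 ≤ 2.7182818286 ^ 3 := by gcongr
  refine le_of_sq_le_sq ?_ (by positivity)
  rw [h]
  nlinarith

lemma aux_lower (k : ℕ) :
    ((k : ℝ) + 1/2) * Real.log ((k : ℝ) + 1/2) - k ≤ Real.log (k.factorial) := by
  rcases Nat.eq_zero_or_pos k with rfl | hk
  · have : Real.log (1/2) ≤ 0 := Real.log_nonpos (by norm_num) (by norm_num)
    simp only [Nat.cast_zero, zero_add, Nat.factorial_zero, Nat.cast_one, Real.log_one]
    linarith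
  · have h := Stirling.le_log_factorial_stirling (n := k) (by omega)
    have hk1 : (1 : ℝ) ≤ k := by exact_mod_cast hk
    have hk0 : (0 : ℝ) < k := by linarith
    have e : (k : ℝ) + 1/2 = k * (1 + 1 / (2 * k)) := by field_simp
    have h2 : Real.log ((k : ℝ) + 1/2) ≤ Real.log k + 1 / (2 * k) := by
      rw [e, Real.log_mul (by positivity) (by positivity)]
      have := Real.log_le_sub_one_of_pos (x := 1 + 1 / (2 * (k : ℝ))) (by positivity)
      linarith
    have h3 : ((k : ℝ) + 1/2) * Real.log ((k : ℝ) + 1/2)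
        ≤ ((k : ℝ) + 1/2) * (Real.log k + 1 / (2 * k)) := by gcongr
    have h4 : ((k : ℝ) + 1/2) * (1 / (2 * k)) ≤ 3 / 4 := by
      rw [mul_one_div, div_le_div_iff₀ (by positivity) (by norm_num)]; linarith
    have := aux_log_two_pi_lower
    linarith

lemma aux_upper (n : ℕ) (hn : 1 ≤ n) :
    Real.log (n.factorial) ≤ 1 + Real.log n / 2 + n * Real.log n - n := by
  obtain ⟨m, rfl⟩ : ∃ m, n = m + 1 := ⟨n - 1, by omega⟩
  have h := Stirling.log_stirlingSeq'_antitone (Nat.zero_le m)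
  simp only [Function.comp, Nat.succ_eq_add_one, zero_add] at h
  rw [Stirling.log_stirlingSeq_formula, Stirling.log_stirlingSeq_formula] at h
  have hm : ((m + 1 : ℕ) : ℝ) ≠ 0 := by positivity
  rw [Real.log_mul (by norm_num) hm, Real.log_div hm (by positivity)] at h
  simp at h ⊢
  linarith

theorem aux_main
    (d : ℕ) (hd : 1 ≤ d) (α : Fin d → ℕ) :
    (((∑ i, α i : ℕ) : ℝ) + d / 2) * Real.log ((((∑ i, α i : ℕ) : ℝ) + d / 2) / d)
      - (∑ i, α i : ℕ) ≤ ∑ i, Real.log ((α i).factorial) := by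
  have hd0 : (0 : ℝ) < d := by exact_mod_cast hd
  have h1 : ∑ i, (((α i : ℝ) + 1/2) * Real.log ((α i : ℝ) + 1/2) - α i)
      ≤ ∑ i, Real.log ((α i).factorial) := Finset.sum_le_sum fun i _ => aux_lower _
  refine le_trans ?_ h1
  have hs : ∑ i, ((α i : ℝ) + 1/2) = ((∑ i, α i : ℕ) : ℝ) + d / 2 := by
    rw [Finset.sum_add_distrib]; simp; ring
  have J := Real.convexOn_mul_log.map_sum_le (t := Finset.univ) (w := fun _ : Fin d => (1 / d : ℝ))
    (p := fun i => (α i : ℝ) + 1/2) (fun _ _ => by positivity) (by simp; field_simp)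
    (fun i _ => by simp only [Set.mem_Ici]; positivity)
  simp only [smul_eq_mul] at J
  rw [← Finset.mul_sum, ← Finset.mul_sum, hs] at J
  rw [Finset.sum_sub_distrib, Nat.cast_sum]
  rw [Nat.cast_sum] at J
  have J2 := mul_le_mul_of_nonneg_left J hd0.le
  rw [← mul_assoc, ← mul_assoc, ← mul_assoc, mul_one_div_cancel hd0.ne', one_mul, one_mul,
    one_div_mul_eq_div] at J2
  linarith

/-- multinomial coefficient bound
`|α|!/α! < √2 e^d d^{|α|+d/2} / (√(2π|α|))^{d−1}`. -/
theorem multinomial_coefficient_bound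
    (d : ℕ) (hd : 1 ≤ d) (α : Fin d → ℕ) (hα : 1 ≤ ∑ i, α i) :
    (Nat.factorial (∑ i, α i) : ℝ) / ((∏ i, Nat.factorial (α i) : ℕ) : ℝ) <
      Real.sqrt 2 * Real.exp d * (d : ℝ) ^ (((∑ i, α i : ℕ) : ℝ) + (d : ℝ) / 2) /
        (Real.sqrt (2 * Real.pi * (∑ i, α i))) ^ ((d : ℝ) - 1) := by
  have hM := aux_main d hd α
  have hU := aux_upper _ hα
  have hP : Real.log ((∏ i, Nat.factorial (α i) : ℕ) : ℝ) = ∑ i, Real.log ((α i).factorial) := by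
    rw [Nat.cast_prod, Real.log_prod]
    intro i _
    positivity
  have hP0 : (0 : ℝ) < ((∏ i, Nat.factorial (α i) : ℕ) : ℝ) := by
    exact_mod_cast Finset.prod_pos fun i _ => Nat.factorial_pos _
  rw [← hP] at hM
  generalize ((∏ i, Nat.factorial (α i) : ℕ) : ℝ) = P at *
  generalize (∑ i, α i) = n at *
  have hd1 : (1 : ℝ) ≤ d := by exact_mod_cast hd
  have hd0 : (0 : ℝ) < d := by linarith
  have hn1 : (1 : ℝ) ≤ n := by exact_mod_cast hα
  have hn0 : (0 : ℝ) < n := by linarith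
  have hf : (0 : ℝ) < n.factorial := by positivity
  have hr : (0 : ℝ) < (d : ℝ) ^ ((n : ℝ) + (d : ℝ) / 2) := by positivity
  have hq : (0 : ℝ) < Real.sqrt (2 * Real.pi * n) ^ ((d : ℝ) - 1) := by positivity
  rw [← Real.log_lt_log_iff (by positivity) (by positivity), Real.log_div hf.ne' hP0.ne',
    Real.log_div (by positivity) hq.ne', Real.log_mul (by positivity) hr.ne',
    Real.log_mul (by positivity) (by positivity), Real.log_exp, Real.log_rpow hd0,
    Real.log_rpow (by positivity), Real.log_sqrt (by positivity), Real.log_sqrt (by positivity),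
    Real.log_mul (by positivity) hn0.ne']
  have e1 : Real.log (((n : ℝ) + d / 2) / d)
      = Real.log n + Real.log (((n : ℝ) + d / 2) / n) - Real.log d := by
    rw [Real.log_div (by positivity) hd0.ne', Real.log_div (by positivity) hn0.ne']; ring
  have e2 : (d : ℝ) / 2 ≤ ((n : ℝ) + d / 2) * Real.log (((n : ℝ) + d / 2) / n) := by
    have := Real.one_sub_inv_le_log_of_pos (x := ((n : ℝ) + d / 2) / n) (by positivity)
    calc (d : ℝ) / 2 = ((n : ℝ) + d / 2) * (1 - (((n : ℝ) + d / 2) / n)⁻¹) := by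
          field_simp; ring
      _ ≤ _ := by gcongr
  rw [e1] at hM
  have l2 : 0 < Real.log 2 := Real.log_pos (by norm_num)
  have l3 : ((d : ℝ) - 1) * Real.log (2 * Real.pi) ≤ ((d : ℝ) - 1) * 2 :=
    mul_le_mul_of_nonneg_left aux_log_two_pi (by linarith)
  nlinarith
end

section
/- For every integer m ≥ 1, the series Σ_{n=1}^{∞} n^m (1/2)^n converges and Σ_{n=1}^{∞} n^m (1/2)^n = 2 Σ_{k=1}^{m} k! · S(m,k), where S(m,k) denotes the number of partitions of an m-element set into exactly k nonempty blocks (the Stirling number of the second kind). Equivalently, the polylogarithm value Li_{−m}(1/2) equals 2 Σ_{k=1}^{m} k! S(m,k). -/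
open scoped Classical

/-- The Stirling number of the second kind `S(m,k)`: the number of partitions of an
`m`-element set into exactly `k` nonempty blocks. -/
noncomputable def stirlingSecond (m k : ℕ) : ℕ :=
  (Finset.univ.filter
      (fun P : Finset (Finset (Fin m)) =>
        P.card = k ∧
        (∀ B ∈ P, B.Nonempty) ∧
        (P : Set (Finset (Fin m))).PairwiseDisjoint id ∧
        P.sup id = Finset.univ)).card

/-- The valid partitions of `Fin m`. -/
def IsPart {m : ℕ} (P : Finset (Finset (Fin m))) : Prop :=
  (∀ B ∈ P, B.Nonempty) ∧
    (P : Set (Finset (Fin m))).PairwiseDisjoint id ∧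
    P.sup id = Finset.univ

/-- The set of nonempty fibers of `f`. -/
noncomputable def fibers {m n : ℕ} (f : Fin m → Fin n) : Finset (Finset (Fin m)) :=
  Finset.univ.image (fun i => Finset.univ.filter (fun j => f j = f i))

lemma fibers_isPart {m n : ℕ} (f : Fin m → Fin n) : IsPart (fibers f) := by
  refine ⟨?_, ?_, ?_⟩
  · intro B hB
    simp only [fibers, Finset.mem_image, Finset.mem_univ, true_and] at hB
    obtain ⟨i, rfl⟩ := hB
    exact ⟨i, by simp⟩
  · intro B hB C hC hne
    simp only [fibers, Finset.coe_image, Set.mem_image] at hB hC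
    obtain ⟨i, -, rfl⟩ := hB
    obtain ⟨j, -, rfl⟩ := hC
    simp only [Function.onFun, id]
    rw [Finset.disjoint_left]
    intro a ha hb
    simp only [Finset.mem_filter, Finset.mem_univ, true_and] at ha hb
    exact hne (by rw [← ha, ← hb])
  · rw [Finset.eq_univ_iff_forall]
    intro i
    rw [Finset.mem_sup]
    exact ⟨Finset.univ.filter (fun j => f j = f i), by simp [fibers], by simp⟩

lemma exists_block {m : ℕ} {P : Finset (Finset (Fin m))} (hP : IsPart P) :
    ∃ b : Fin m → P, (∀ i (B : P), i ∈ B.1 ↔ b i = B) ∧ Function.Surjective b := by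
  obtain ⟨h1, h2, h3⟩ := hP
  have h : ∀ i : Fin m, ∃ B : P, i ∈ B.1 := by
    intro i
    have : i ∈ P.sup id := by rw [h3]; simp
    rw [Finset.mem_sup] at this
    obtain ⟨B, hB, hi⟩ := this
    exact ⟨⟨B, hB⟩, hi⟩
  choose b hb using h
  have key : ∀ i (B : P), i ∈ B.1 ↔ b i = B := by
    intro i B
    constructor
    · intro hi
      by_contra hne
      have hd := h2 (b i).2 B.2 (fun h => hne (Subtype.ext h))
      exact Finset.disjoint_left.1 hd (hb i) hi
    · rintro rfl
      exact hb i
  refine ⟨b, key, ?_⟩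
  intro B
  obtain ⟨i, hi⟩ := h1 B.1 B.2
  exact ⟨i, (key i B).1 hi⟩

lemma card_fiber {m : ℕ} (n : ℕ) {P : Finset (Finset (Fin m))} (hP : IsPart P) :
    (Finset.univ.filter (fun f : Fin m → Fin n => fibers f = P)).card
      = n.descFactorial P.card := by
  obtain ⟨b, hb, hs⟩ := exists_block hP
  have hc : Fintype.card (P ↪ Fin n) = n.descFactorial P.card := by
    rw [Fintype.card_embedding_eq]; simp
  rw [← hc, ← Finset.card_univ]
  symm
  refine Finset.card_bij (fun (g : P ↪ Fin n) _ => fun i => g (b i)) ?_ ?_ ?_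
  · intro g _
    simp only [Finset.mem_filter, Finset.mem_univ, true_and]
    ext B
    have hfib : ∀ i, Finset.univ.filter (fun j => g (b j) = g (b i)) = (b i).1 := by
      intro i
      ext j
      simp [hb]
    simp only [fibers, Finset.mem_image, Finset.mem_univ, true_and, hfib]
    constructor
    · rintro ⟨i, rfl⟩
      exact (b i).2
    · intro hB
      obtain ⟨i, hi⟩ := hs ⟨B, hB⟩
      exact ⟨i, by rw [hi]⟩
  · intro g _ g' _ h
    ext B
    obtain ⟨i, rfl⟩ := hs B
    exact congrArg Fin.val (congrFun h i)
  · intro f hf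
    simp only [Finset.mem_filter, Finset.mem_univ, true_and] at hf
    have key : ∀ i j, f j = f i ↔ b j = b i := by
      intro i j
      have hm : Finset.univ.filter (fun j => f j = f i) ∈ P := by
        rw [← hf]; simp [fibers]
      have h1 := (hb i ⟨_, hm⟩).1 (by simp)
      have h2 := hb j ⟨_, hm⟩
      rw [← h1] at h2
      rw [← h2, h1]
      simp
    choose r hr using hs
    refine ⟨⟨fun B => f (r B), ?_⟩, Finset.mem_univ _, ?_⟩
    · intro B C h
      have := (key _ _).1 h
      rwa [hr, hr] at this
    · funext i
      exact (key _ _).2 (hr _)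

lemma pow_eq_sum (m n : ℕ) (hm : 1 ≤ m) :
    n ^ m = ∑ k ∈ Finset.Icc 1 m, stirlingSecond m k * n.descFactorial k := by
  set T := Finset.univ.filter (fun P : Finset (Finset (Fin m)) => IsPart P) with hT
  have h1 : n ^ m = ∑ P ∈ T, n.descFactorial P.card := by
    have := Finset.card_eq_sum_card_fiberwise (f := fun f : Fin m → Fin n => fibers f)
      (s := Finset.univ) (t := T) (fun f _ => by simp [hT, fibers_isPart])
    rw [Finset.card_univ, Fintype.card_fun, Fintype.card_fin, Fintype.card_fin] at this
    rw [this]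
    refine Finset.sum_congr rfl fun P hP => ?_
    exact card_fiber n (by simpa [hT] using hP)
  have h2 : ∀ P ∈ T, P.card ∈ Finset.Icc 1 m := by
    intro P hP
    obtain ⟨b, hb, hs⟩ := exists_block (P := P) (by simpa [hT] using hP)
    rw [Finset.mem_Icc]
    constructor
    · exact Finset.card_pos.2 ⟨_, (b ⟨0, hm⟩).2⟩
    · simpa using Fintype.card_le_of_surjective b hs
  rw [h1, ← Finset.sum_fiberwise_of_maps_to h2]
  refine Finset.sum_congr rfl fun k _ => ?_
  rw [Finset.sum_congr rfl (g := fun _ => n.descFactorial k)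
    (fun P hP => by rw [(Finset.mem_filter.1 hP).2])]
  rw [Finset.sum_const, smul_eq_mul]
  congr 1
  unfold stirlingSecond
  congr 1
  ext P
  simp only [hT, Finset.mem_filter, Finset.mem_univ, true_and]
  unfold IsPart
  tauto

lemma hasSum_desc (k : ℕ) :
    HasSum (fun n : ℕ => (n.descFactorial k : ℝ) * (1 / 2 : ℝ) ^ n) (2 * (k.factorial : ℝ)) := by
  have h := hasSum_choose_mul_geometric_of_norm_lt_one (𝕜 := ℝ) k (r := 1 / 2)
    (by norm_num)
  have h' := h.mul_left ((k.factorial : ℝ) * (1 / 2) ^ k)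
  rw [← hasSum_nat_add_iff' k, Finset.sum_eq_zero, sub_zero]
  · convert! h' using 1
    · funext n
      rw [Nat.descFactorial_eq_factorial_mul_choose, pow_add]
      push_cast
      ring
    · have : (1 : ℝ) - 1 / 2 = 1 / 2 := by norm_num
      rw [this, pow_succ]
      field_simp
  · intro i hi
    rw [Nat.descFactorial_eq_zero_iff_lt.2 (Finset.mem_range.1 hi)]
    simp

/-- `Li_{−m}(1/2) = Σ_{n≥1} n^m (1/2)^n = 2 Σ_{k=1}^m k! S(m,k)`. -/
theorem polylog_half_eq_stirling_sum (m : ℕ) (hm : 1 ≤ m) :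
    Summable (fun n : ℕ => (((n + 1 : ℕ) : ℝ)) ^ m * (1 / 2 : ℝ) ^ (n + 1)) ∧
    ∑' n : ℕ, (((n + 1 : ℕ) : ℝ)) ^ m * (1 / 2 : ℝ) ^ (n + 1) =
      2 * ∑ k ∈ Finset.Icc 1 m, (Nat.factorial k : ℝ) * (stirlingSecond m k : ℝ) := by
  have h0 : HasSum (fun n : ℕ => (n : ℝ) ^ m * (1 / 2 : ℝ) ^ n)
      (2 * ∑ k ∈ Finset.Icc 1 m, (Nat.factorial k : ℝ) * (stirlingSecond m k : ℝ)) := by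
    have := hasSum_sum (s := Finset.Icc 1 m)
      (fun k _ => (hasSum_desc k).mul_left (stirlingSecond m k : ℝ))
    convert! this using 1
    · funext n
      rw [← Nat.cast_pow, pow_eq_sum m n hm]
      push_cast
      rw [Finset.sum_mul]
      exact Finset.sum_congr rfl fun k _ => by ring
    · rw [Finset.mul_sum]
      exact Finset.sum_congr rfl fun k _ => by ring
  have h1 := (hasSum_nat_add_iff' 1).2 h0
  rw [Finset.sum_range_one, Nat.cast_zero, zero_pow (by omega), zero_mul, sub_zero] at h1
  exact ⟨h1.summable, h1.tsum_eq⟩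
end

section
/- Let ζ : ℝ → ℝ be defined by ζ(x) = 1/(1+e^x). Then ζ is infinitely differentiable, and for every integer m ≥ 1, sup_{x∈ℝ} | ζ^{(m)}(x) | ≤ Σ_{k=1}^{m} k! · S(m,k), where S(m,k) denotes the number of partitions of an m-element set into exactly k nonempty blocks (the Stirling number of the second kind). -/
open scoped Classical

theorem stirlingSecond_self_pos (m : ℕ) : 1 ≤ stirlingSecond m m := by
  unfold stirlingSecond
  refine Finset.card_pos.mpr ⟨Finset.univ.image (fun i : Fin m => ({i} : Finset (Fin m))), ?_⟩
  simp only [Finset.mem_filter, Finset.mem_univ, true_and]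
  refine ⟨?_, ?_, ?_, ?_⟩
  · rw [Finset.card_image_of_injective _ Finset.singleton_injective]; simp
  · intro B hB
    obtain ⟨i, -, rfl⟩ := Finset.mem_image.mp hB
    exact Finset.singleton_nonempty i
  · intro A hA B hB hAB
    simp only [Finset.coe_image, Set.mem_image] at hA hB
    obtain ⟨a, -, rfl⟩ := hA
    obtain ⟨b, -, rfl⟩ := hB
    simp only [Function.onFun, id, Finset.disjoint_singleton]
    rintro rfl
    exact hAB rfl
  · ext i
    simp [Finset.mem_sup]

/-- The logistic function. -/
noncomputable def lgs (x : ℝ) : ℝ := 1 / (1 + Real.exp x)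

theorem lgs_contDiff (n : WithTop ℕ∞) : ContDiff ℝ n lgs := by
  unfold lgs
  exact contDiff_const.div (contDiff_const.add Real.contDiff_exp)
    (fun x => by positivity)

theorem lgs_hasDerivAt (x : ℝ) : HasDerivAt lgs (-(lgs x * (1 - lgs x))) x := by
  have h0 : 1 + Real.exp x ≠ 0 := by positivity
  have h := ((Real.hasDerivAt_exp x).const_add 1).inv h0
  have e : lgs = fun y => (1 + Real.exp y)⁻¹ := by funext y; simp [lgs]
  have h' : HasDerivAt lgs (-Real.exp x / (1 + Real.exp x) ^ 2) x := by
    rw [e]; exact h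
  refine h'.congr_deriv ?_
  unfold lgs
  field_simp
  ring

theorem lgs_pos (x : ℝ) : 0 ≤ lgs x := by unfold lgs; positivity

theorem lgs_le_one (x : ℝ) : lgs x ≤ 1 := by
  unfold lgs
  rw [div_le_one (by positivity)]
  linarith [Real.exp_pos x]

/-- Monomials in the logistic function and its complement. -/
noncomputable def lmon (i j : ℕ) (x : ℝ) : ℝ := lgs x ^ i * (1 - lgs x) ^ j

theorem lmon_contDiff (n : WithTop ℕ∞) (i j : ℕ) : ContDiff ℝ n (lmon i j) :=
  ((lgs_contDiff n).pow i).mul ((contDiff_const.sub (lgs_contDiff n)).pow j)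

theorem lmon_deriv (i j : ℕ) :
    deriv (lmon i j) = (fun x => (-(i : ℝ)) * lmon i (j + 1) x) +
      (fun x => (j : ℝ) * lmon (i + 1) j x) := by
  funext x
  have h1 := (lgs_hasDerivAt x).pow i
  have h2 := ((lgs_hasDerivAt x).const_sub 1).pow j
  have h := (h1.mul h2).deriv
  change deriv (lmon i j) x = _ at h
  rw [h]
  simp only [Pi.add_apply, lmon, Pi.pow_apply]
  rcases i with _ | i <;> rcases j with _ | j <;> simp [pow_succ] <;> ring

theorem lmon_bound (m : ℕ) : ∀ (i j : ℕ) (x : ℝ),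
    |iteratedDeriv m (lmon i j) x| ≤ ((i + j).ascFactorial m : ℝ) := by
  induction m with
  | zero =>
    intro i j x
    have h0 := lgs_pos x
    have h1 := lgs_le_one x
    have h2 : 0 ≤ 1 - lgs x := by linarith
    simp only [iteratedDeriv_zero, Nat.ascFactorial_zero, Nat.cast_one, lmon]
    rw [abs_of_nonneg (by positivity)]
    exact mul_le_one₀ (pow_le_one₀ h0 h1) (by positivity) (pow_le_one₀ h2 (by linarith))
  | succ m ih =>
    intro i j x
    rw [iteratedDeriv_succ', lmon_deriv,
      iteratedDeriv_add (contDiff_const.mul (lmon_contDiff _ _ _)).contDiffAt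
        (contDiff_const.mul (lmon_contDiff _ _ _)).contDiffAt,
      iteratedDeriv_const_mul_field, iteratedDeriv_const_mul_field]
    have a := ih i (j + 1) x
    have b := ih (i + 1) j x
    have e : i + 1 + j = i + j + 1 := by omega
    rw [← add_assoc] at a
    rw [e] at b
    have key : (((i + j).ascFactorial (m + 1) : ℕ) : ℝ)
        = ((i : ℝ) + j) * ((i + j + 1).ascFactorial m : ℝ) := by
      rw [Nat.ascFactorial_succ, ← Nat.succ_ascFactorial]
      push_cast; ring
    rw [key]
    refine (abs_add_le _ _).trans ?_
    rw [abs_mul, abs_mul, abs_neg, Nat.abs_cast, Nat.abs_cast, add_mul]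
    gcongr

/-- `ζ(x) = 1/(1+eˣ)` is smooth and its `m`-th derivative is bounded by
`Σ_{k=1}^m k! S(m,k)`. -/
theorem logistic_derivative_bound :
    ContDiff ℝ (⊤ : ℕ∞) (fun x : ℝ => 1 / (1 + Real.exp x)) ∧
    ∀ m : ℕ, 1 ≤ m → ∀ x : ℝ,
      |iteratedDeriv m (fun x : ℝ => 1 / (1 + Real.exp x)) x| ≤
        ∑ k ∈ Finset.Icc 1 m, (Nat.factorial k : ℝ) * (stirlingSecond m k : ℝ) := by
  refine ⟨lgs_contDiff _, fun m hm x => ?_⟩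
  have h := lmon_bound m 1 0 x
  have e : lmon 1 0 = fun x : ℝ => 1 / (1 + Real.exp x) := by
    funext y; simp [lmon, lgs]
  rw [e, Nat.add_zero, Nat.one_ascFactorial] at h
  have hs : (1 : ℝ) ≤ stirlingSecond m m := by exact_mod_cast stirlingSecond_self_pos m
  calc _ ≤ (m.factorial : ℝ) := h
    _ ≤ (m.factorial : ℝ) * (stirlingSecond m m : ℝ) :=
        le_mul_of_one_le_right (by positivity) hs
    _ ≤ _ := Finset.single_le_sum
        (f := fun k => (Nat.factorial k : ℝ) * (stirlingSecond m k : ℝ))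
        (fun k _ => by positivity) (Finset.mem_Icc.mpr ⟨hm, le_rfl⟩)
end

section
/- Let φ : ℝ → ℝ be defined by φ(x) = 2 log( (2+e^x)/(1+e^x) ) and let f : ℝ → ℝ be defined by f(u) = 4e^{−u} − 10e^{−u/2} + e^{u/2} − e^u + 6. Then there exists θ > 1 such that: (i) for every integer m ≥ 1, sup_{x∈ℝ} |φ^{(m)}(x)| ≤ 2 (θ(1+θ))^m (m−1)!; and (ii) for every integer k ≥ 0 and every integer m ≥ 0, sup_{x∈ℝ} | (d/dx)^m ( f^{(k)} ∘ φ )(x) | ≤ 10 (θ(1+θ))^m (m+1)!. -/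
open scoped ContDiff in
/-- smooth with `m`-th derivative bounded by `K` -/
def DBd (m : ℕ) (K : ℝ) (F : ℝ → ℝ) : Prop :=
  ContDiff ℝ ∞ F ∧ ∀ x, |iteratedDeriv m F x| ≤ K

lemma DBd.add {m : ℕ} {K L : ℝ} {F G : ℝ → ℝ} (hF : DBd m K F) (hG : DBd m L G) :
    DBd m (K + L) (fun x => F x + G x) := by
  refine ⟨hF.1.add hG.1, fun x => ?_⟩
  have h : iteratedDeriv m (fun x => F x + G x) x = iteratedDeriv m F x + iteratedDeriv m G x :=
    iteratedDeriv_fun_add (hF.1.contDiffAt.of_le (by exact_mod_cast le_top))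
      (hG.1.contDiffAt.of_le (by exact_mod_cast le_top))
  rw [h]
  exact (abs_add_le _ _).trans (add_le_add (hF.2 x) (hG.2 x))

lemma DBd.mul {m : ℕ} {K c C : ℝ} {F : ℝ → ℝ} (hF : DBd m K F) (hc : |c| ≤ C) :
    DBd m (C * K) (fun x => c * F x) := by
  refine ⟨contDiff_const.mul hF.1, fun x => ?_⟩
  rw [iteratedDeriv_const_mul_field, abs_mul]
  exact mul_le_mul hc (hF.2 x) (abs_nonneg _) ((abs_nonneg _).trans hc)

lemma DBd.const {m : ℕ} (hm : 1 ≤ m) (c : ℝ) : DBd m 0 (fun _ => c) := by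
  refine ⟨contDiff_const, fun x => ?_⟩
  rw [iteratedDeriv_const]
  have : m ≠ 0 := by omega
  simp [this]

lemma asc_mono (n m : ℕ) : n.ascFactorial m ≤ (n + 1).ascFactorial m := by
  induction m with
  | zero => simp
  | succ m ih =>
    rw [Nat.ascFactorial_succ, Nat.ascFactorial_succ]
    exact Nat.mul_le_mul (by omega) ih

open scoped ContDiff in
lemma pow_bd (s : ℝ → ℝ) (a : ℝ) (ha : |a| ≤ 2) (hs : ContDiff ℝ ∞ s)
    (h01 : ∀ x, |s x| ≤ 1) (hd : ∀ x, HasDerivAt s (a * s x ^ 2 - s x) x) (m : ℕ) :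
    ∀ n : ℕ, DBd m (3 ^ m * (n.ascFactorial m : ℝ)) (fun x => s x ^ n) := by
  induction m with
  | zero =>
    intro n
    refine ⟨hs.pow n, fun x => ?_⟩
    simp only [iteratedDeriv_zero, abs_pow, pow_zero, Nat.ascFactorial_zero, Nat.cast_one, mul_one]
    exact pow_le_one₀ (abs_nonneg _) (h01 x)
  | succ m ih =>
    intro n
    refine ⟨hs.pow n, fun x => ?_⟩
    have hder : deriv (fun x => s x ^ n) =
        fun x => (n : ℝ) * (a * s x ^ (n + 1) + (-1) * s x ^ n) := by
      funext x
      have := ((hd x).fun_pow n).deriv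
      rw [this]
      rcases n with _ | n
      · simp
      · simp only [Nat.add_sub_cancel]
        ring
    rw [iteratedDeriv_succ', hder]
    have hb := (((ih (n + 1)).mul ha).add ((ih n).mul (c := -1) (C := 1) (by simp))).mul
      (c := (n : ℝ)) (C := (n : ℝ)) (by simp)
    refine (hb.2 x).trans ?_
    have hmono : ((n.ascFactorial m : ℕ) : ℝ) ≤ ((n + 1).ascFactorial m : ℕ) := by
      exact_mod_cast asc_mono n m
    have hsucc : n.ascFactorial (m + 1) = n * (n + 1).ascFactorial m := by
      rw [Nat.ascFactorial_succ, Nat.succ_ascFactorial]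
    rw [hsucc]
    push_cast
    have h3 : (0 : ℝ) ≤ n * 3 ^ m := by positivity
    have := mul_le_mul_of_nonneg_left hmono h3
    rw [pow_succ]
    nlinarith

lemma iter_f (f : ℝ → ℝ)
    (hf : ∀ u : ℝ, f u = 4 * Real.exp (-u) - 10 * Real.exp (-u / 2) +
      Real.exp (u / 2) - Real.exp u + 6) (k : ℕ) :
    iteratedDeriv k f = fun u => 4 * (-1) ^ k * Real.exp (-u)
      - 10 * (-1 / 2) ^ k * Real.exp (-u / 2) + (1 / 2) ^ k * Real.exp (u / 2)
      - Real.exp u + 6 * 0 ^ k := by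
  induction k with
  | zero => funext u; simp [hf u]
  | succ k ih =>
    rw [iteratedDeriv_succ, ih]
    funext u
    have h1 : HasDerivAt (fun u : ℝ => Real.exp (-u)) (Real.exp (-u) * (-1)) u :=
      (hasDerivAt_id u).fun_neg.exp
    have h2 : HasDerivAt (fun u : ℝ => Real.exp (-u / 2)) (Real.exp (-u / 2) * (-1 / 2)) u :=
      ((hasDerivAt_id u).fun_neg.div_const 2).exp
    have h3 : HasDerivAt (fun u : ℝ => Real.exp (u / 2)) (Real.exp (u / 2) * (1 / 2)) u :=
      ((hasDerivAt_id u).div_const 2).exp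
    have h := ((((h1.const_mul (4 * (-1) ^ k)).fun_sub
      (h2.const_mul (10 * (-1 / 2) ^ k))).fun_add (h3.const_mul ((1 / 2) ^ k))).fun_sub
      (Real.hasDerivAt_exp u)).add_const (6 * 0 ^ k)
    rw [h.deriv]
    ring

lemma val_bd (k : ℕ) (y w : ℝ) (hyw : y * w = 1) (hw1 : 1 ≤ w) (hw2 : w ≤ 2) :
    |4 * (-1) ^ k * y ^ 2 - 10 * (-1 / 2) ^ k * y + (1 / 2) ^ k * w - w ^ 2 + 6 * 0 ^ k| ≤ 10 := by
  have hy0 : 0 < y := by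
    by_contra h
    nlinarith
  have hy1 : y ≤ 1 := by nlinarith
  have hy2 : 1 / 2 ≤ y := by nlinarith
  have hq : 4 * y ^ 2 + w ^ 2 ≤ 5 := by
    have e : 2 * y + w ≤ 3 := by nlinarith [mul_nonneg (sub_nonneg.2 hy1) (sub_nonneg.2 hw2)]
    nlinarith
  rcases k with _ | _ | k
  · rw [abs_le]; constructor <;> norm_num <;> nlinarith
  · rw [abs_le]; constructor <;> norm_num <;> nlinarith
  · have hp0 : (0 : ℝ) ≤ (1 / 2) ^ (k + 2) := by positivity
    have hp : ((1 : ℝ) / 2) ^ (k + 2) ≤ 1 / 4 := by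
      rw [pow_add]
      have := pow_le_one₀ (n := k) (by norm_num : (0 : ℝ) ≤ 1 / 2) (by norm_num)
      norm_num at this ⊢
      linarith
    have hs : ((-1 : ℝ) / 2) ^ (k + 2) = (-1) ^ (k + 2) * (1 / 2) ^ (k + 2) := by
      rw [← mul_pow]; norm_num
    have hz : (0 : ℝ) ^ (k + 1 + 1) = 0 := by simp
    rw [hz]
    rw [show k + 1 + 1 = k + 2 from rfl, hs]
    generalize ((1 : ℝ) / 2) ^ (k + 2) = p at *
    have ha : p * y ≤ 1 / 4 := by nlinarith
    have ha0 : 0 ≤ p * y := by positivity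
    have hb : p * w ≤ 1 / 2 := by nlinarith
    have hb0 : 0 ≤ p * w := by positivity
    rcases neg_one_pow_eq_or ℝ (k + 2) with h | h <;> rw [h, abs_le] <;>
      constructor <;> nlinarith [sq_nonneg y, sq_nonneg w]

open scoped ContDiff in
lemma st_props (b : ℝ) (hb : 1 ≤ b) :
    ContDiff ℝ ∞ (fun x => (b + Real.exp x)⁻¹) ∧
    (∀ x, |(b + Real.exp x)⁻¹| ≤ 1) ∧
    (∀ x, HasDerivAt (fun x => (b + Real.exp x)⁻¹)
      (b * ((b + Real.exp x)⁻¹) ^ 2 - (b + Real.exp x)⁻¹) x) := by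
  have hpos : ∀ x, 0 < b + Real.exp x := fun x => by have := Real.exp_pos x; linarith
  refine ⟨(contDiff_const.add Real.contDiff_exp).inv fun x => (hpos x).ne', fun x => ?_, fun x => ?_⟩
  · rw [abs_of_pos (inv_pos.2 (hpos x))]
    exact inv_le_one_of_one_le₀ (by have := Real.exp_pos x; linarith)
  · have h := ((Real.hasDerivAt_exp x).const_add b).fun_inv (hpos x).ne'
    refine h.congr_deriv ?_
    symm
    have h0 := (hpos x).ne'
    rw [eq_div_iff (pow_ne_zero 2 h0)]
    have h1 := inv_mul_cancel₀ h0
    generalize (b + Real.exp x)⁻¹ = z at h1 ⊢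
    linear_combination (b * (z * (b + Real.exp x) + 1) - (b + Real.exp x)) * h1

/-- for `φ(x) = 2 log((2+eˣ)/(1+eˣ))` and
`f(u) = 4e^{−u} − 10e^{−u/2} + e^{u/2} − e^u + 6`, there exists `θ > 1` with
`sup|φ^{(m)}| ≤ 2(θ(1+θ))^m (m−1)!` and `sup|(f^{(k)}∘φ)^{(m)}| ≤ 10(θ(1+θ))^m (m+1)!`. -/
theorem functional_nonlinearity_example_bounds
    (φ f : ℝ → ℝ)
    (hφ : ∀ x : ℝ, φ x = 2 * Real.log ((2 + Real.exp x) / (1 + Real.exp x)))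
    (hf : ∀ u : ℝ, f u = 4 * Real.exp (-u) - 10 * Real.exp (-u / 2) +
      Real.exp (u / 2) - Real.exp u + 6) :
    ∃ θ : ℝ, 1 < θ ∧
      (∀ m : ℕ, 1 ≤ m → ∀ x : ℝ,
        |iteratedDeriv m φ x| ≤ 2 * (θ * (1 + θ)) ^ m * (Nat.factorial (m - 1) : ℝ)) ∧
      (∀ (k m : ℕ) (x : ℝ),
        |iteratedDeriv m (fun x => iteratedDeriv k f (φ x)) x| ≤
          10 * (θ * (1 + θ)) ^ m * (Nat.factorial (m + 1) : ℝ)) := by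
  obtain ⟨s1, s2, s3⟩ := st_props 1 le_rfl
  obtain ⟨t1, t2, t3⟩ := st_props 2 one_le_two
  have S := pow_bd _ 1 (by norm_num) s1 s2 s3
  have T := pow_bd _ 2 (by norm_num) t1 t2 t3
  have A1 : ∀ m : ℕ, Nat.ascFactorial 1 m = m.factorial := fun m => by
    simpa using Nat.zero_ascFactorial_succ m
  have A2 : ∀ m : ℕ, Nat.ascFactorial 2 m = (m + 1).factorial := fun m => by
    have := Nat.factorial_mul_ascFactorial 1 m
    simp only [Nat.factorial_one, one_mul] at this
    rw [this, add_comm]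
  have hp1 : ∀ x, 0 < 1 + Real.exp x := fun x => by have := Real.exp_pos x; linarith
  have hp2 : ∀ x, 0 < 2 + Real.exp x := fun x => by have := Real.exp_pos x; linarith
  refine ⟨3, by norm_num, ?_, ?_⟩
  · intro m hm x
    obtain ⟨n, rfl⟩ : ∃ n, m = n + 1 := ⟨m - 1, by omega⟩
    have hd : deriv φ = fun x => 2 * (((1 + Real.exp x)⁻¹) ^ 1 + (-2) * ((2 + Real.exp x)⁻¹) ^ 1) := by
      funext x
      rw [funext hφ]
      have h := (((((Real.hasDerivAt_exp x).const_add 2).fun_div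
        ((Real.hasDerivAt_exp x).const_add 1) (hp1 x).ne').log
        (div_pos (hp2 x) (hp1 x)).ne').const_mul 2)
      rw [h.deriv]
      have h1 := (hp1 x).ne'
      have h2 := (hp2 x).ne'
      field_simp
      ring
    rw [iteratedDeriv_succ', hd]
    have hb := (((S n 1).add ((T n 1).mul (c := -2) (C := 2) (by norm_num)))).mul
      (c := 2) (C := 2) (by norm_num)
    refine (hb.2 x).trans ?_
    rw [A1, Nat.add_sub_cancel]
    have h3 : (3 : ℝ) ^ (n + 1) ≤ (3 * (1 + 3)) ^ (n + 1) :=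
      pow_le_pow_left₀ (by norm_num) (by norm_num) _
    have hF : (0 : ℝ) ≤ (n.factorial : ℝ) := by positivity
    have := mul_le_mul_of_nonneg_right h3 hF
    rw [pow_succ (3 : ℝ)] at this
    linarith
  · intro k m x
    have hw : ∀ x, Real.exp (φ x / 2) = 1 + (1 + Real.exp x)⁻¹ := fun x => by
      rw [hφ, mul_div_cancel_left₀ _ two_ne_zero, Real.exp_log (div_pos (hp2 x) (hp1 x))]
      have h1 := (hp1 x).ne'
      field_simp
      ring
    have hy : ∀ x, Real.exp (-φ x / 2) = 1 - (2 + Real.exp x)⁻¹ := fun x => by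
      rw [neg_div, Real.exp_neg, hw]
      have h1 := (hp1 x).ne'
      have h2 := (hp2 x).ne'
      have h3 : 1 + (1 + Real.exp x)⁻¹ ≠ 0 := by
        have := inv_pos.2 (hp1 x); positivity
      apply inv_eq_of_mul_eq_one_right
      field_simp
      ring
    have hw2 : ∀ x, Real.exp (φ x) = Real.exp (φ x / 2) ^ 2 := fun x => by
      rw [← Real.exp_nat_mul]; congr 1; push_cast; ring
    have hy2 : ∀ x, Real.exp (-φ x) = Real.exp (-φ x / 2) ^ 2 := fun x => by
      rw [← Real.exp_nat_mul]; congr 1; push_cast; ring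
    rw [iter_f f hf k]
    rcases Nat.eq_zero_or_pos m with rfl | hm
    · simp only [iteratedDeriv_zero, pow_zero, mul_one, zero_add, Nat.factorial_one, Nat.cast_one]
      rw [hw2, hy2]
      apply val_bd
      · rw [← Real.exp_add, neg_div, neg_add_cancel, Real.exp_zero]
      · rw [hw]; have := inv_pos.2 (hp1 x); linarith
      · rw [hw]; have := (abs_le.1 (s2 x)).2; linarith
    · have c1 : |(4 : ℝ) * (-1) ^ k| ≤ 4 := by rw [abs_mul, abs_pow]; norm_num
      have hh : |(1 / 2 : ℝ) ^ k| ≤ 1 := by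
        rw [abs_pow]; exact pow_le_one₀ (abs_nonneg _) (by rw [abs_le]; norm_num)
      have hh2 : |(-1 / 2 : ℝ) ^ k| ≤ 1 := by
        rw [abs_pow]; exact pow_le_one₀ (abs_nonneg _) (by rw [abs_le]; norm_num)
      have c2 : |10 * (-1 / 2 : ℝ) ^ k - 2 * (4 * (-1) ^ k)| ≤ 18 := by
        rw [abs_le] at *; constructor <;> linarith
      have c3 : |(1 / 2 : ℝ) ^ k - 2| ≤ 3 := by
        rw [abs_le] at *; constructor <;> linarith
      have hb := (((((T m 2).mul c1).add ((T m 1).mul c2)).add ((S m 1).mul c3)).add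
        ((S m 2).mul (c := -1) (C := 1) (by simp))).add (DBd.const hm
          (4 * (-1) ^ k - 10 * (-1 / 2 : ℝ) ^ k + (1 / 2 : ℝ) ^ k - 1 + 6 * 0 ^ k))
      have hfin := hb.2 x
      have hEq2 : (fun x => 4 * (-1) ^ k * Real.exp (-φ x)
          - 10 * (-1 / 2) ^ k * Real.exp (-φ x / 2) + (1 / 2) ^ k * Real.exp (φ x / 2)
          - Real.exp (φ x) + 6 * 0 ^ k) = (fun x => 4 * (-1) ^ k * ((2 + Real.exp x)⁻¹) ^ 2
          + (10 * (-1 / 2 : ℝ) ^ k - 2 * (4 * (-1) ^ k)) * ((2 + Real.exp x)⁻¹) ^ 1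
          + ((1 / 2 : ℝ) ^ k - 2) * ((1 + Real.exp x)⁻¹) ^ 1
          + (-1) * ((1 + Real.exp x)⁻¹) ^ 2
          + (4 * (-1) ^ k - 10 * (-1 / 2 : ℝ) ^ k + (1 / 2 : ℝ) ^ k - 1 + 6 * 0 ^ k)) := by
        funext x
        rw [hw2, hy2, hw, hy]
        ring
      rw [hEq2]
      refine hfin.trans ?_
      rw [A1, A2]
      have hFF : (m.factorial : ℝ) ≤ ((m + 1).factorial : ℝ) := by
        exact_mod_cast Nat.factorial_le (Nat.le_succ m)
      have h3 : (3 : ℝ) ^ m * 4 ≤ (3 * (1 + 3)) ^ m := by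
        rw [mul_pow]
        have : (4 : ℝ) ≤ (1 + 3) ^ m := by
          calc (4 : ℝ) = (1 + 3) ^ 1 := by norm_num
            _ ≤ _ := pow_le_pow_right₀ (by norm_num) hm
        gcongr
      have hF : (0 : ℝ) ≤ ((m + 1).factorial : ℝ) := by positivity
      have h4 := mul_le_mul_of_nonneg_right h3 hF
      have h5 := mul_le_mul_of_nonneg_left hFF (by positivity : (0 : ℝ) ≤ 3 ^ m)
      have h6 : (0 : ℝ) ≤ 3 ^ m * ((m + 1).factorial : ℝ) := by positivity
      linarith
end

section
/- Let T > 0 and define u : [0,T] × ℝ → ℝ by u(t,x) = 2 log( (2 + e^{x−(T−t)}) / (1 + e^{x−(T−t)}) ). Then u is infinitely differentiable, satisfies 0 < u(t,x) < 2 log 2 for all (t,x) ∈ [0,T] × ℝ, satisfies the terminal condition u(T,x) = 2 log( (2+e^x)/(1+e^x) ), and solves the semilinear heat equation ∂u/∂t (t,x) + (1/2) ∂²u/∂x² (t,x) + 4 e^{−u(t,x)} − 10 e^{−u(t,x)/2} + e^{u(t,x)/2} − e^{u(t,x)} + 6 = 0 for all (t,x) ∈ [0,T] × ℝ. -/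
lemma heat_aux_d1 (s : ℝ) :
    HasDerivAt (fun s : ℝ => 2 * Real.log ((2 + Real.exp s) / (1 + Real.exp s)))
      (2 * (Real.exp s / (2 + Real.exp s) - Real.exp s / (1 + Real.exp s))) s := by
  have hy := Real.exp_pos s
  have h2 := (Real.hasDerivAt_exp s).const_add 2
  have h1 := (Real.hasDerivAt_exp s).const_add 1
  have h := ((h2.div h1 (by positivity)).log
    (by simp only [Pi.div_apply]; positivity)).const_mul 2
  refine h.congr_deriv ?_
  simp only [Pi.div_apply]
  field_simp

lemma heat_aux_d2 (s : ℝ) :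
    HasDerivAt (fun s : ℝ => 2 * (Real.exp s / (2 + Real.exp s) - Real.exp s / (1 + Real.exp s)))
      (2 * (2 * Real.exp s / (2 + Real.exp s) ^ 2 - Real.exp s / (1 + Real.exp s) ^ 2)) s := by
  have hy := Real.exp_pos s
  have h0 := Real.hasDerivAt_exp s
  have h2 := h0.const_add 2
  have h1 := h0.const_add 1
  have h := ((h0.div h2 (by positivity)).sub (h0.div h1 (by positivity))).const_mul 2
  refine h.congr_deriv ?_
  field_simp
  ring

/-- `u(t,x) = 2 log((2+e^{x−(T−t)})/(1+e^{x−(T−t)}))` is smooth, takes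
values in `(0, 2 log 2)`, has the prescribed terminal condition, and solves the
semilinear heat equation `∂ₜu + ½∂ₓₓu + 4e^{−u} − 10e^{−u/2} + e^{u/2} − e^{u} + 6 = 0`
on `[0,T] × ℝ`. -/
theorem explicit_solution_semilinear_heat
    (T : ℝ) (hT : 0 < T) (u : ℝ → ℝ → ℝ)
    (hu : ∀ t x : ℝ, u t x =
      2 * Real.log ((2 + Real.exp (x - (T - t))) / (1 + Real.exp (x - (T - t))))) :
    ContDiff ℝ (⊤ : ℕ∞) (fun p : ℝ × ℝ => u p.1 p.2) ∧
    (∀ t ∈ Set.Icc (0 : ℝ) T, ∀ x : ℝ, 0 < u t x ∧ u t x < 2 * Real.log 2) ∧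
    (∀ x : ℝ, u T x = 2 * Real.log ((2 + Real.exp x) / (1 + Real.exp x))) ∧
    (∀ t ∈ Set.Icc (0 : ℝ) T, ∀ x : ℝ,
      deriv (fun t' => u t' x) t + (1 / 2) * iteratedDeriv 2 (fun x' => u t x') x +
        4 * Real.exp (-(u t x)) - 10 * Real.exp (-(u t x) / 2) +
        Real.exp ((u t x) / 2) - Real.exp (u t x) + 6 = 0) := by
  obtain rfl : u = fun t x => 2 * Real.log ((2 + Real.exp (x - (T - t))) /
      (1 + Real.exp (x - (T - t)))) := by
    funext t x
    exact hu t x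
  refine ⟨?_, ?_, ?_, ?_⟩
  · refine contDiff_const.mul (ContDiff.log (ContDiff.div (by fun_prop) (by fun_prop) ?_) ?_)
    · intro p
      positivity
    · intro p
      positivity
  · intro t _ x
    have hy := Real.exp_pos (x - (T - t))
    constructor
    · refine mul_pos two_pos (Real.log_pos ?_)
      rw [lt_div_iff₀ (by positivity)]
      linarith
    · refine mul_lt_mul_of_pos_left (Real.log_lt_log (by positivity) ?_) two_pos
      rw [div_lt_iff₀ (by positivity)]
      linarith
  · intro x
    simp
  · intro t _ x
    have ht : HasDerivAt (fun t' : ℝ => x - (T - t')) 1 t := by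
      simpa using ((hasDerivAt_id t).const_sub T).const_sub x
    have hx : ∀ x' : ℝ, HasDerivAt (fun x' : ℝ => x' - (T - t)) 1 x' := fun x' =>
      (hasDerivAt_id x').sub_const (T - t)
    have e1 := ((heat_aux_d1 (x - (T - t))).comp t ht).deriv
    have e2 : deriv (fun x' : ℝ => 2 * Real.log ((2 + Real.exp (x' - (T - t))) /
        (1 + Real.exp (x' - (T - t))))) = fun x' => 2 * (Real.exp (x' - (T - t)) /
          (2 + Real.exp (x' - (T - t))) - Real.exp (x' - (T - t)) /
          (1 + Real.exp (x' - (T - t)))) := by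
      funext x'
      have := ((heat_aux_d1 (x' - (T - t))).comp x' (hx x')).deriv
      rw [mul_one] at this
      exact this
    have e3 := ((heat_aux_d2 (x - (T - t))).comp x (hx x)).deriv
    simp only [Function.comp_def, mul_one] at e1 e3
    rw [iteratedDeriv_succ, iteratedDeriv_one]
    simp only [e1, e2, e3]
    have hy := Real.exp_pos (x - (T - t))
    generalize Real.exp (x - (T - t)) = y at hy
    have hv : 0 < (2 + y) / (1 + y) := by positivity
    have f1 : Real.exp (2 * Real.log ((2 + y) / (1 + y)) / 2) = (2 + y) / (1 + y) := by
      rw [mul_div_cancel_left₀ _ two_ne_zero, Real.exp_log hv]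
    have f2 : Real.exp (2 * Real.log ((2 + y) / (1 + y))) = ((2 + y) / (1 + y)) ^ 2 := by
      rw [two_mul, Real.exp_add, Real.exp_log hv, sq]
    rw [neg_div, Real.exp_neg, Real.exp_neg, f1, f2]
    field_simp
    ring
end
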